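/- arXiv:2605.07664 — 2 statements merged into one kernel-verified Lean document; each statement's English description precedes it below -/
import Mathlib

section
/- Let T be a finite tree and let c be a subtree core of T. Then |log(1 + N(T,c)) − log N(T)| ≤ log 2. -/
/-- A subtree of a graph: a nonempty set of vertices inducing a connected subgraph. -/
def IsSubtree {V : Type*} (G : SimpleGraph V) (S : Finset V) : Prop :=
  S.Nonempty ∧ (G.induce (S : Set V)).Connected

/-- `N(T)`: the number of subtrees. -/
noncomputable def numSubtrees {V : Type*} [Fintype V] (G : SimpleGraph V) : ℕ :=
  Nat.card {S : Finset V // IsSubtree G S}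

/-- `N(T,v)`: the number of subtrees containing the vertex `v`. -/
noncomputable def numSubtreesContaining {V : Type*} [Fintype V] (G : SimpleGraph V) (v : V) : ℕ :=
  Nat.card {S : Finset V // IsSubtree G S ∧ v ∈ S}

/-!
Let `v` be a vertex of a tree, with branches `B₁, …, Bₖ` hanging off it, and let `fᵢ` be the number
of subtrees of `Bᵢ` through the neighbour of `v` in `Bᵢ`. Choosing a trace on each branch gives
`N(T,v) = ∏ (1 + fᵢ)`, while a subtree avoiding `v` lies in a single branch. By induction a tree
with `f` subtrees through its root has at most `f (f + 1) / 2` subtrees, so at most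
`∑ fᵢ (fᵢ + 1) / 2` subtrees avoid `v`.

At a core `c`, single out the largest value `y` among the `fᵢ`, and let `x` be the product of
`1 + fⱼ` over the other branches. Comparing `N(T,c) = x (y + 1)` with the number `(x + 1) y` of
subtrees through the neighbour gives `y ≤ x`. As `∑ fⱼ ≤ x - 1` over the other branches, at most
`((y + 1) (x - 1) + y (y + 1)) / 2 ≤ x (y + 1)` subtrees avoid `c`, that is,
`N(T,c) ≤ N(T) ≤ 2 N(T,c)`.
-/

section

open Finset

variable {V : Type*} {G : SimpleGraph V}

namespace IsSubtree

variable {S R W : Finset V} {v u : V}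

theorem singleton (G : SimpleGraph V) (v : V) : IsSubtree G {v} := by
  refine ⟨singleton_nonempty v, ?_⟩
  rw [coe_singleton]
  exact .of_subsingleton

theorem union [DecidableEq V] (hS : IsSubtree G S) (hR : IsSubtree G R) (hv : v ∈ S) (hu : u ∈ R)
    (hvu : G.Adj v u) : IsSubtree G (S ∪ R) := by
  refine ⟨hS.1.mono subset_union_left, ?_⟩
  rw [coe_union]
  exact SimpleGraph.connected_induce_union hS.2.preconnected hR.2.preconnected hv hu hvu

theorem subset_of_adj_closed (hS : IsSubtree G S) {X : Set V} (hv : v ∈ S) (hvX : v ∈ X)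
    (hX : ∀ x ∈ S, ∀ y ∈ S, x ∈ X → G.Adj x y → y ∈ X) : ↑S ⊆ X := by
  intro w hw
  obtain ⟨p⟩ := hS.2.preconnected ⟨v, hv⟩ ⟨w, hw⟩
  by_contra hwX
  obtain ⟨d, -, hfst, hsnd⟩ := p.exists_boundary_dart (Subtype.val ⁻¹' X) hvX hwX
  exact hsnd (hX _ d.fst.2 _ d.snd.2 hfst d.adj)

theorem exists_adj (hW : IsSubtree G W) (hv : v ∈ W) (hne : W ≠ {v}) : ∃ u ∈ W, G.Adj v u := by
  have : Nontrivial (W : Set V) :=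
    Set.nontrivial_coe_sort.2 (W.nontrivial_iff_ne_singleton hv |>.2 hne)
  obtain ⟨u, hu⟩ := hW.2.preconnected.exists_adj_of_nontrivial ⟨v, hv⟩
  exact ⟨u, u.2, hu⟩

end IsSubtree

/-- `A` and `B` are the two sides of the edge `vu`: disjoint vertex sets, joined by no other edge.
Cutting `A ∪ B` here peels the branch `B`, rooted at `u`, off the vertex `v`. -/
structure IsEdgeCut (G : SimpleGraph V) (A B : Finset V) (v u : V) : Prop where
  disjoint : Disjoint A B
  left_mem : v ∈ A
  right_mem : u ∈ B
  adj : G.Adj v u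
  eq_of_adj : ∀ x ∈ A, ∀ y ∈ B, G.Adj x y → x = v ∧ y = u

namespace IsEdgeCut

variable {A B S R : Finset V} {v u w : V}

theorem symm (h : IsEdgeCut G A B v u) : IsEdgeCut G B A u v where
  disjoint := h.disjoint.symm
  left_mem := h.right_mem
  right_mem := h.left_mem
  adj := h.adj.symm
  eq_of_adj x hx y hy hxy := (h.eq_of_adj y hy x hx hxy.symm).symm

theorem notMem_right (h : IsEdgeCut G A B v u) : v ∉ B :=
  disjoint_left.1 h.disjoint h.left_mem

theorem inter [DecidableEq V] (h : IsEdgeCut G A B v u) (hv : v ∈ S) (hu : u ∈ S) :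
    IsEdgeCut G (S ∩ A) (S ∩ B) v u where
  disjoint := h.disjoint.mono inter_subset_right inter_subset_right
  left_mem := mem_inter.2 ⟨hv, h.left_mem⟩
  right_mem := mem_inter.2 ⟨hu, h.right_mem⟩
  adj := h.adj
  eq_of_adj x hx y hy := h.eq_of_adj x (mem_inter.1 hx).2 y (mem_inter.1 hy).2

theorem isSubtree_left [DecidableEq V] (h : IsEdgeCut G A B v u) (hAB : IsSubtree G (A ∪ B)) :
    IsSubtree G A := by
  refine ⟨⟨v, h.left_mem⟩, (SimpleGraph.connected_iff_exists_forall_reachable _).2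
    ⟨⟨v, h.left_mem⟩, fun w => ?_⟩⟩
  let X : Set V :=
    {x | x ∈ B ∨ ∃ hx : x ∈ A, (G.induce (A : Set V)).Reachable ⟨v, h.left_mem⟩ ⟨x, hx⟩}
  have hX : ∀ x ∈ A ∪ B, ∀ y ∈ A ∪ B, x ∈ X → G.Adj x y → y ∈ X := by
    intro x _ y hy hx hxy
    refine (mem_union.1 hy).symm.imp_right fun hyA => ⟨hyA, ?_⟩
    obtain hxB | ⟨hxA, hvx⟩ := hx
    · obtain ⟨rfl, -⟩ := h.eq_of_adj y hyA x hxB hxy.symm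
      exact .rfl
    · exact hvx.trans (SimpleGraph.Adj.reachable hxy)
  have hwX : w.1 ∈ X := hAB.subset_of_adj_closed (mem_union_left B h.left_mem)
    (Or.inr ⟨h.left_mem, .rfl⟩) hX (mem_union_left B w.2)
  exact (hwX.resolve_left (disjoint_left.1 h.disjoint w.2)).2

theorem isSubtree_right [DecidableEq V] (h : IsEdgeCut G A B v u) (hAB : IsSubtree G (A ∪ B)) :
    IsSubtree G B :=
  h.symm.isSubtree_left (by rwa [union_comm])

theorem subset_left [DecidableEq V] (h : IsEdgeCut G A B v u) (hS : IsSubtree G S)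
    (hSAB : S ⊆ A ∪ B) (hw : w ∈ S) (hwA : w ∈ A) (hvu : v ∈ S → u ∉ S) : S ⊆ A := by
  refine hS.subset_of_adj_closed (X := A) hw hwA fun x hxS y hyS hxA hxy => ?_
  refine (mem_union.1 (hSAB hyS)).resolve_right fun hyB => ?_
  obtain ⟨rfl, rfl⟩ := h.eq_of_adj x hxA y hyB hxy
  exact hvu hxS hyS

theorem subset_or_subset [DecidableEq V] (h : IsEdgeCut G A B v u) (hS : IsSubtree G S)
    (hSAB : S ⊆ A ∪ B) (hv : v ∉ S) : S ⊆ A ∨ S ⊆ B := by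
  obtain ⟨w, hw⟩ := hS.1
  refine (mem_union.1 (hSAB hw)).imp (fun hwA => ?_) (fun hwB => ?_)
  · exact h.subset_left hS hSAB hw hwA fun hvS => absurd hvS hv
  · exact h.symm.subset_left hS (by rwa [union_comm]) hw hwB fun _ => hv

theorem union_inter_left [DecidableEq V] (h : IsEdgeCut G A B v u) (hS : S ⊆ A) (hR : R ⊆ B) :
    (S ∪ R) ∩ A = S := by
  rw [union_inter_distrib_right, inter_eq_left.2 hS,
    disjoint_iff_inter_eq_empty.1 (h.disjoint.symm.mono_left hR), union_empty]

end IsEdgeCut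

theorem exists_isEdgeCut [DecidableEq V] (hG : G.IsAcyclic) {W : Finset V} {v u : V} (hv : v ∈ W)
    (hu : u ∈ W) (hvu : G.Adj v u) : ∃ A B, A ∪ B = W ∧ IsEdgeCut G A B v u := by
  classical
  let H := G.deleteEdges {s(v, u)}
  have hbridge : ¬ H.Reachable v u :=
    SimpleGraph.isBridge_iff.1 (SimpleGraph.isAcyclic_iff_forall_adj_isBridge.1 hG hvu)
  refine ⟨W.filter (H.Reachable v), W.filter (¬ H.Reachable v ·), filter_union_filter_not_eq _ W,
    disjoint_filter_filter_not W W _, mem_filter.2 ⟨hv, .rfl⟩, mem_filter.2 ⟨hu, hbridge⟩, hvu, ?_⟩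
  intro x hx y hy hxy
  rw [mem_filter] at hx hy
  have hedge : s(x, y) = s(v, u) := by
    by_contra hne
    have hHxy : H.Adj x y := SimpleGraph.deleteEdges_adj.2 ⟨hxy, hne⟩
    exact hy.2 (hx.2.trans hHxy.reachable)
  refine (Sym2.eq_iff.1 hedge).resolve_right ?_
  rintro ⟨-, rfl⟩
  exact hy.2 .rfl

@[elab_as_elim]
theorem IsSubtree.rooted_induction [DecidableEq V] (hG : G.IsAcyclic)
    {motive : ∀ W v, IsSubtree G W → v ∈ W → Prop}
    (singleton : ∀ v, motive {v} v (.singleton G v) (mem_singleton_self v))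
    (union : ∀ A B v u (h : IsEdgeCut G A B v u) (hAB : IsSubtree G (A ∪ B)),
      motive A v (h.isSubtree_left hAB) h.left_mem →
      motive B u (h.isSubtree_right hAB) h.right_mem →
      motive (A ∪ B) v hAB (mem_union_left B h.left_mem))
    {W : Finset V} {v : V} (hW : IsSubtree G W) (hv : v ∈ W) : motive W v hW hv := by
  induction hn : #W using Nat.strong_induction_on generalizing W v with
  | _ n ih =>
    by_cases hne : W = {v}
    · subst hne
      exact singleton v
    obtain ⟨u, hu, hvu⟩ := hW.exists_adj hv hne
    obtain ⟨A, B, rfl, h⟩ := exists_isEdgeCut hG hv hu hvu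
    have hcard : #(A ∪ B) = #A + #B := card_union_of_disjoint h.disjoint
    have hA : 0 < #A := card_pos.2 ⟨v, h.left_mem⟩
    have hB : 0 < #B := card_pos.2 ⟨u, h.right_mem⟩
    exact union A B v u h hW
      (ih #A (by omega) (h.isSubtree_left hW) h.left_mem rfl)
      (ih #B (by omega) (h.isSubtree_right hW) h.right_mem rfl)

open Classical in
/-- The subtrees of `G` contained in `W`, so that `N(T)` counts them for `W` the whole vertex set.
Those avoiding a vertex `v` are encoded as the subtrees within `W.erase v`. -/
noncomputable def subtreesWithin (G : SimpleGraph V) (W : Finset V) : Finset (Finset V) :=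
  {S ∈ W.powerset | IsSubtree G S}

open Classical in
/-- The subtrees of `G` contained in `W` and containing `v`, so that `N(T,v)` counts them for `W`
the whole vertex set. -/
noncomputable def rootedSubtrees (G : SimpleGraph V) (W : Finset V) (v : V) : Finset (Finset V) :=
  {S ∈ subtreesWithin G W | v ∈ S}

section Counting

variable {W S : Finset V} {v u : V}

theorem mem_subtreesWithin : S ∈ subtreesWithin G W ↔ S ⊆ W ∧ IsSubtree G S := by
  simp only [subtreesWithin, mem_filter, mem_powerset]

theorem mem_rootedSubtrees :
    S ∈ rootedSubtrees G W v ↔ S ⊆ W ∧ IsSubtree G S ∧ v ∈ S := by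
  simp only [rootedSubtrees, mem_filter, mem_subtreesWithin, and_assoc]

theorem card_rootedSubtrees_mono {W' : Finset V} (h : W ⊆ W') :
    #(rootedSubtrees G W v) ≤ #(rootedSubtrees G W' v) :=
  card_le_card fun _ hS =>
    mem_rootedSubtrees.2 ((mem_rootedSubtrees.1 hS).imp_left fun hSW => hSW.trans h)

theorem card_rootedSubtrees_pos (hv : v ∈ W) : 0 < #(rootedSubtrees G W v) :=
  card_pos.2 ⟨{v}, mem_rootedSubtrees.2
    ⟨singleton_subset_iff.2 hv, .singleton G v, mem_singleton_self v⟩⟩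

theorem card_subtreesWithin_eq_add [DecidableEq V] (G : SimpleGraph V) (W : Finset V) (v : V) :
    #(subtreesWithin G W) = #(rootedSubtrees G W v) + #(subtreesWithin G (W.erase v)) := by
  classical
  rw [← card_filter_add_card_filter_not (v ∈ ·)]
  congr 2
  · ext S; simp [rootedSubtrees]
  · ext S
    simp only [mem_filter, mem_subtreesWithin, subset_erase]
    tauto

theorem subtreesWithin_empty (G : SimpleGraph V) : subtreesWithin G ∅ = ∅ :=
  eq_empty_of_forall_notMem fun _ hS =>
    have hS := mem_subtreesWithin.1 hS
    hS.2.1.ne_empty (subset_empty.1 hS.1)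

namespace IsEdgeCut

variable [DecidableEq V] {A B : Finset V}

theorem subtreesWithin_erase (h : IsEdgeCut G A B v u) :
    subtreesWithin G ((A ∪ B).erase v) =
      subtreesWithin G (A.erase v) ∪ subtreesWithin G B := by
  ext S
  simp only [mem_union, mem_subtreesWithin, subset_erase]
  constructor
  · rintro ⟨⟨hSAB, hvS⟩, hS⟩
    exact (h.subset_or_subset hS hSAB hvS).imp (⟨⟨·, hvS⟩, hS⟩) (⟨·, hS⟩)
  · rintro (⟨⟨hSA, hvS⟩, hS⟩ | ⟨hSB, hS⟩)
    · exact ⟨⟨hSA.trans subset_union_left, hvS⟩, hS⟩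
    · exact ⟨⟨hSB.trans subset_union_right, fun hv => h.notMem_right (hSB hv)⟩, hS⟩

theorem rootedSubtrees_erase (h : IsEdgeCut G A B v u) :
    rootedSubtrees G ((A ∪ B).erase v) u = rootedSubtrees G B u := by
  ext S
  simp only [mem_rootedSubtrees, subset_erase]
  constructor
  · rintro ⟨⟨hSAB, hvS⟩, hS, huS⟩
    exact ⟨h.symm.subset_left hS (by rwa [union_comm]) huS h.right_mem fun _ => hvS, hS, huS⟩
  · rintro ⟨hSB, hS, huS⟩
    exact ⟨⟨hSB.trans subset_union_right, fun hv => h.notMem_right (hSB hv)⟩, hS, huS⟩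

theorem inter_mem_rootedSubtrees (h : IsEdgeCut G A B v u)
    (hS : S ∈ rootedSubtrees G (A ∪ B) v) :
    S ∩ A ∈ rootedSubtrees G A v ∧ S ∩ B ∈ insert ∅ (rootedSubtrees G B u) := by
  obtain ⟨hSAB, hS, hvS⟩ := mem_rootedSubtrees.1 hS
  by_cases huS : u ∈ S
  · have hcut := h.inter hvS huS
    have hS' : IsSubtree G (S ∩ A ∪ S ∩ B) := by
      rwa [← inter_union_distrib_left, inter_eq_left.2 hSAB]
    exact ⟨mem_rootedSubtrees.2 ⟨inter_subset_right, hcut.isSubtree_left hS', hcut.left_mem⟩,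
      mem_insert_of_mem (mem_rootedSubtrees.2
        ⟨inter_subset_right, hcut.isSubtree_right hS', hcut.right_mem⟩)⟩
  · have hSA := h.subset_left hS hSAB hvS h.left_mem fun _ => huS
    rw [inter_eq_left.2 hSA, disjoint_iff_inter_eq_empty.1 (h.disjoint.mono_left hSA)]
    exact ⟨mem_rootedSubtrees.2 ⟨hSA, hS, hvS⟩, mem_insert_self ∅ _⟩

theorem union_mem_rootedSubtrees (h : IsEdgeCut G A B v u) {R : Finset V}
    (hS : S ∈ rootedSubtrees G A v) (hR : R ∈ insert ∅ (rootedSubtrees G B u)) :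
    S ∪ R ∈ rootedSubtrees G (A ∪ B) v := by
  obtain ⟨hSA, hS, hvS⟩ := mem_rootedSubtrees.1 hS
  rw [mem_rootedSubtrees]
  rcases mem_insert.1 hR with rfl | hR
  · rw [union_empty]
    exact ⟨hSA.trans subset_union_left, hS, hvS⟩
  · obtain ⟨hRB, hR, huR⟩ := mem_rootedSubtrees.1 hR
    exact ⟨union_subset_union hSA hRB, hS.union hR hvS huR h.adj, mem_union_left R hvS⟩

theorem card_rootedSubtrees_union (h : IsEdgeCut G A B v u) :
    #(rootedSubtrees G (A ∪ B) v) = #(rootedSubtrees G A v) * (#(rootedSubtrees G B u) + 1) := by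
  have hempty : ∅ ∉ rootedSubtrees G B u := fun h => notMem_empty u (mem_rootedSubtrees.1 h).2.2
  rw [← card_insert_of_notMem hempty, ← card_product]
  refine card_nbij' (fun S => (S ∩ A, S ∩ B)) (fun p => p.1 ∪ p.2) (fun S hS => ?_)
    (fun p hp => ?_) (fun S hS => ?_) (fun p hp => ?_)
  · exact mem_product.2 (h.inter_mem_rootedSubtrees hS)
  · exact h.union_mem_rootedSubtrees (mem_product.1 hp).1 (mem_product.1 hp).2
  · exact (inter_union_distrib_left S A B).symm.trans
      (inter_eq_left.2 (mem_rootedSubtrees.1 hS).1)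
  · obtain ⟨hS, hR⟩ := mem_product.1 hp
    have hSA : p.1 ⊆ A := (mem_rootedSubtrees.1 hS).1
    have hRB : p.2 ⊆ B := by
      rcases mem_insert.1 hR with hR | hR
      · exact hR ▸ empty_subset B
      · exact (mem_rootedSubtrees.1 hR).1
    refine Prod.ext (h.union_inter_left hSA hRB) ?_
    simpa only [union_comm] using h.symm.union_inter_left hRB hSA

theorem card_rootedSubtrees_union_le_iff (h : IsEdgeCut G A B v u) :
    #(rootedSubtrees G (A ∪ B) u) ≤ #(rootedSubtrees G (A ∪ B) v) ↔
      #(rootedSubtrees G B u) ≤ #(rootedSubtrees G A v) := by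
  rw [h.card_rootedSubtrees_union, union_comm, h.symm.card_rootedSubtrees_union, mul_add_one,
    mul_add_one, mul_comm, add_le_add_iff_left]

theorem card_subtreesWithin_union_erase_le (h : IsEdgeCut G A B v u) :
    #(subtreesWithin G ((A ∪ B).erase v)) ≤
      #(subtreesWithin G (A.erase v)) + #(subtreesWithin G B) := by
  rw [h.subtreesWithin_erase]
  exact card_union_le _ _

end IsEdgeCut

theorem card_rootedSubtrees_erase_lt [DecidableEq V] (hG : G.IsAcyclic) (hv : v ∈ W) (hu : u ∈ W)
    (hvu : G.Adj v u) : #(rootedSubtrees G (W.erase v) u) < #(rootedSubtrees G W v) := by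
  obtain ⟨A, B, rfl, hcut⟩ := exists_isEdgeCut hG hv hu hvu
  rw [hcut.rootedSubtrees_erase, hcut.card_rootedSubtrees_union]
  exact Nat.le_mul_of_pos_left _ (card_rootedSubtrees_pos hcut.left_mem)

namespace IsSubtree

/-- In the notation of the header, `∑ fᵢ (fᵢ + 1) ≤ m ∑ fᵢ ≤ m (∏ (1 + fᵢ) - 1)` whenever every
`fᵢ` is less than `m`; the terms are moved so that no subtraction occurs. -/
theorem two_mul_card_subtreesWithin_erase_add_le [DecidableEq V] (hG : G.IsAcyclic)
    (hW : IsSubtree G W) (hv : v ∈ W) {m : ℕ}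
    (hm : ∀ w ∈ W, G.Adj v w → #(rootedSubtrees G (W.erase v) w) < m) :
    2 * #(subtreesWithin G (W.erase v)) + m ≤ m * #(rootedSubtrees G W v) := by
  induction hW, hv using IsSubtree.rooted_induction hG generalizing m with
  | singleton v =>
    rw [erase_singleton, subtreesWithin_empty, card_empty, mul_zero, zero_add]
    exact Nat.le_mul_of_pos_right m (card_rootedSubtrees_pos (mem_singleton_self v))
  | union A B v u h _ ihA ihB =>
    have hA := ihA fun w hw hvw =>
      (card_rootedSubtrees_mono (erase_subset_erase v subset_union_left)).trans_lt
        (hm w (mem_union_left B hw) hvw)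
    have hB := ihB fun w hw huw => card_rootedSubtrees_erase_lt hG h.right_mem hw huw
    have hu : #(rootedSubtrees G B u) < m := by
      simpa only [h.rootedSubtrees_erase] using hm u (mem_union_right A h.right_mem) h.adj
    have herase := h.card_subtreesWithin_union_erase_le
    rw [card_subtreesWithin_eq_add G B u] at herase
    rw [h.card_rootedSubtrees_union]
    set x := #(rootedSubtrees G A v)
    set y := #(rootedSubtrees G B u)
    have hx : 1 ≤ x := card_rootedSubtrees_pos h.left_mem
    calc 2 * #(subtreesWithin G ((A ∪ B).erase v)) + m
        ≤ (2 * #(subtreesWithin G (A.erase v)) + m) +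
            (2 * #(subtreesWithin G (B.erase u)) + y) + y := by omega
      _ ≤ m * x + (y + 1) * y := by linarith
      _ ≤ m * x + m * (x * y) := by
        gcongr
        · exact hu
        · exact Nat.le_mul_of_pos_left y hx
      _ = m * (x * (y + 1)) := by ring

theorem two_mul_card_subtreesWithin_le (hG : G.IsAcyclic) (hW : IsSubtree G W) (hv : v ∈ W) :
    2 * #(subtreesWithin G W) ≤ #(rootedSubtrees G W v) * (#(rootedSubtrees G W v) + 1) := by
  classical
  have herase := two_mul_card_subtreesWithin_erase_add_le hG hW hv
    fun w hw hvw => card_rootedSubtrees_erase_lt hG hv hw hvw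
  rw [card_subtreesWithin_eq_add G W v]
  linarith

theorem card_subtreesWithin_erase_le_card_rootedSubtrees [DecidableEq V] (hG : G.IsAcyclic)
    (hW : IsSubtree G W) {c : V} (hcW : c ∈ W)
    (hc : ∀ u ∈ W, G.Adj c u → #(rootedSubtrees G W u) ≤ #(rootedSubtrees G W c)) :
    #(subtreesWithin G (W.erase c)) ≤ #(rootedSubtrees G W c) := by
  classical
  obtain hN | hN := (W.filter (G.Adj c)).eq_empty_or_nonempty
  · have hleaf : ∀ w ∈ W, G.Adj c w → #(rootedSubtrees G (W.erase c) w) < 1 :=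
      fun w hw hcw => absurd hcw (filter_eq_empty_iff.1 hN hw)
    have hbound := two_mul_card_subtreesWithin_erase_add_le hG hW hcW hleaf
    omega
  obtain ⟨u, hu, hmax⟩ := exists_max_image _ (fun w => #(rootedSubtrees G (W.erase c) w)) hN
  obtain ⟨huW, hcu⟩ := mem_filter.1 hu
  obtain ⟨A, B, rfl, h⟩ := exists_isEdgeCut hG hcW huW hcu
  have huc : #(rootedSubtrees G B u) ≤ #(rootedSubtrees G A c) :=
    h.card_rootedSubtrees_union_le_iff.1 (hc u huW hcu)
  have hA : 2 * #(subtreesWithin G (A.erase c)) + (#(rootedSubtrees G B u) + 1) ≤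
      (#(rootedSubtrees G B u) + 1) * #(rootedSubtrees G A c) := by
    refine two_mul_card_subtreesWithin_erase_add_le hG (h.isSubtree_left hW) h.left_mem
      fun w hw hcw => Nat.lt_succ_of_le ?_
    calc #(rootedSubtrees G (A.erase c) w)
        ≤ #(rootedSubtrees G ((A ∪ B).erase c) w) :=
          card_rootedSubtrees_mono (erase_subset_erase c subset_union_left)
      _ ≤ #(rootedSubtrees G ((A ∪ B).erase c) u) :=
          hmax w (mem_filter.2 ⟨mem_union_left B hw, hcw⟩)
      _ = #(rootedSubtrees G B u) := by rw [h.rootedSubtrees_erase]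
  have hB := two_mul_card_subtreesWithin_le hG (h.isSubtree_right hW) h.right_mem
  have herase := h.card_subtreesWithin_union_erase_le
  rw [h.card_rootedSubtrees_union]
  set x := #(rootedSubtrees G A c)
  set y := #(rootedSubtrees G B u)
  have hsq : y * (y + 1) ≤ x * (y + 1) := Nat.mul_le_mul_right _ huc
  linarith

end IsSubtree

end Counting

theorem card_subtreesWithin_univ [Fintype V] (G : SimpleGraph V) :
    #(subtreesWithin G univ) = numSubtrees G := by
  classical
  simp [numSubtrees, subtreesWithin, Fintype.card_subtype]

theorem card_rootedSubtrees_univ [Fintype V] (G : SimpleGraph V) (v : V) :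
    #(rootedSubtrees G univ v) = numSubtreesContaining G v := by
  classical
  simp [numSubtreesContaining, rootedSubtrees, subtreesWithin, Fintype.card_subtype, filter_filter]

theorem isSubtree_univ [Fintype V] (hG : G.Connected) : IsSubtree G univ := by
  have := hG.nonempty
  refine ⟨univ_nonempty, ?_⟩
  rw [coe_univ]
  exact (SimpleGraph.induceUnivIso G).connected_iff.2 hG

theorem numSubtreesContaining_pos [Fintype V] (G : SimpleGraph V) (v : V) :
    0 < numSubtreesContaining G v :=
  card_rootedSubtrees_univ G v ▸ card_rootedSubtrees_pos (mem_univ v)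

theorem numSubtreesContaining_le_numSubtrees [Fintype V] (G : SimpleGraph V) (v : V) :
    numSubtreesContaining G v ≤ numSubtrees G := by
  classical
  rw [← card_subtreesWithin_univ, ← card_rootedSubtrees_univ]
  exact card_le_card (filter_subset _ _)

theorem numSubtrees_le_two_mul_numSubtreesContaining [Fintype V] (hG : G.IsTree) {c : V}
    (hc : ∀ u, G.Adj c u → numSubtreesContaining G u ≤ numSubtreesContaining G c) :
    numSubtrees G ≤ 2 * numSubtreesContaining G c := by
  classical
  simp only [← card_rootedSubtrees_univ, ← card_subtreesWithin_univ] at hc ⊢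
  have herase := (isSubtree_univ hG.connected).card_subtreesWithin_erase_le_card_rootedSubtrees
    hG.isAcyclic (mem_univ c) fun u _ => hc u
  rw [card_subtreesWithin_eq_add G univ c]
  omega

end

theorem abs_log_sub_log_le_log {x y a : ℝ} (hx : 0 < x) (hy : 0 < y) (hxy : x ≤ a * y)
    (hyx : y ≤ a * x) : |Real.log x - Real.log y| ≤ Real.log a := by
  have ha : 0 < a := pos_of_mul_pos_left (hx.trans_le hxy) hy.le
  rw [abs_sub_le_iff, sub_le_iff_le_add, sub_le_iff_le_add, ← Real.log_mul ha.ne' hy.ne',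
    ← Real.log_mul ha.ne' hx.ne']
  exact ⟨Real.log_le_log hx hxy, Real.log_le_log hy hyx⟩

theorem stmt1 {V : Type*} [Fintype V] (G : SimpleGraph V) (hG : G.IsTree)
    (c : V) (hc : ∀ x : V, numSubtreesContaining G x ≤ numSubtreesContaining G c) :
    |Real.log (1 + (numSubtreesContaining G c : ℝ)) - Real.log (numSubtrees G : ℝ)| ≤
      Real.log 2 := by
  have hpos := numSubtreesContaining_pos G c
  have hlower := numSubtreesContaining_le_numSubtrees G c
  have hupper := numSubtrees_le_two_mul_numSubtreesContaining hG fun u _ => hc u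
  refine abs_log_sub_log_le_log (by positivity) ?_ ?_ ?_
  all_goals
    norm_cast
    omega
end

section
/- Let T be a finite tree with at least two vertices. Then |log N(T) − Σ_{w ∈ V(T)} log(1 + 1/M(T,w))| ≤ 2 log 2. -/
/-- The number of subtrees containing `v` but not `u`. -/
noncomputable def numSubtreesWithWithout {V : Type*} [Fintype V] (G : SimpleGraph V) (v u : V) : ℕ :=
  Nat.card {S : Finset V // IsSubtree G S ∧ v ∈ S ∧ u ∉ S}

/-- `M(T,v)`: the minimum, over all neighbours `u` of `v`, of the number of subtrees
containing `v` but not `u`. -/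
noncomputable def subtreeM {V : Type*} [Fintype V] (G : SimpleGraph V) (v : V) : ℕ :=
  sInf ((fun u => numSubtreesWithWithout G v u) '' (G.neighborSet v))

/-!
Write `N_v` for the number of subtrees through `v` and `η(v, u)` for the number of those that avoid
the neighbour `u`. Cutting the edges at `v` gives `N_v = ∏ (1 + η(w, v))` over the neighbours `w`
of `v`, and `η(v, u)` is the same product without the factor of `u`. Root the tree at a vertex `r`
and multiply the identities for `N_r` and for `η(v, parent v)`, `v ≠ r`: this gives
`∏ (1 + 1 / η(w, parent w)) = N_r`, the product being over all `w ≠ r`.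

Now let `r` maximise `N_r`. Along a path, `N` decreases strictly as soon as it has failed to
increase, so it decreases away from `r`, and this makes the parent the neighbour attaining the
minimum `M(w)` for every `w ≠ r`. The sum in question is therefore `log N_r + log (1 + 1 / M(r))`,
whose second term is between `0` and `log 2`, and it remains to compare `N_r` with the number of all
subtrees. A subtree missing `r` lies in the branch at a neighbour `c` of `r`; there it is the
difference of two subtrees through `c`, the smaller one possibly empty, so there are at most
`η(c, r) (1 + η(c, r))` of them. If `c` has the largest `η(c, r)`, this is at most `N_r` because
`N_c ≤ N_r`; the other branches together contribute at most `(1 + η(c, r)) ∑ η(d, r) ≤ N_r` by the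
product formula. Hence there are at most `3 N_r` subtrees.
-/

open Finset

local notation "η" => numSubtreesWithWithout

lemma one_add_sum_le_prod_one_add {ι R : Type*} [CommSemiring R] [PartialOrder R]
    [IsOrderedRing R] {s : Finset ι} {f : ι → R} (hf : ∀ i ∈ s, 0 ≤ f i) :
    1 + ∑ i ∈ s, f i ≤ ∏ i ∈ s, (1 + f i) := by
  classical
  induction s using Finset.induction_on with
  | empty => simp
  | insert a s ha ih =>
    obtain ⟨hfa, hfs⟩ := (forall_mem_insert _ _ _).1 hf
    rw [sum_insert ha, prod_insert ha]
    calc 1 + (f a + ∑ i ∈ s, f i)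
        ≤ 1 + (f a + ∑ i ∈ s, f i) + f a * ∑ i ∈ s, f i :=
          le_add_of_nonneg_right (mul_nonneg hfa (sum_nonneg hfs))
      _ = (1 + f a) * (1 + ∑ i ∈ s, f i) := by ring
      _ ≤ (1 + f a) * ∏ i ∈ s, (1 + f i) :=
          mul_le_mul_of_nonneg_left (ih hfs) (add_nonneg zero_le_one hfa)

lemma log_one_add_one_div_natCast_le_log_two (n : ℕ) :
    Real.log (1 + 1 / (n : ℝ)) ≤ Real.log 2 := by
  have hn : 1 / (n : ℝ) ≤ 1 := by simpa using Nat.cast_inv_le_one n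
  exact Real.log_le_log (by positivity) (by linarith)

/-- `y` separates `a` from `b` if every walk from `a` to `b` passes through `y`. The endpoints are
allowed, so in a tree this says that `y` lies on the path from `a` to `b`. -/
def Separates {V : Type*} (G : SimpleGraph V) (y a b : V) : Prop :=
  ∀ w : G.Walk a b, y ∈ w.support

section Separation

variable {V : Type*} {G : SimpleGraph V} {a b c u v x y z : V}

lemma separates_left (a b : V) : Separates G a a b := fun w => w.start_mem_support

lemma separates_right (a b : V) : Separates G b a b := fun w => w.end_mem_support

namespace Separates

lemma eq_of_self (h : Separates G y a a) : y = a := by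
  simpa using h .nil

lemma eq_or_eq_of_adj (hab : G.Adj a b) (h : Separates G y a b) : y = a ∨ y = b := by
  simpa using h hab.toWalk

lemma symm (h : Separates G y a b) : Separates G y b a := fun w => by
  simpa using h w.reverse

lemma trans (hy : Separates G y a b) (hz : Separates G z a y) : Separates G z a b := by
  classical
  exact fun w => w.support_takeUntil_subset_support (hy w) (hz (w.takeUntil y (hy w)))

lemma left_or_right (h : Separates G y a c) (b : V) :
    Separates G y a b ∨ Separates G y b c := by
  by_contra! hn
  simp only [Separates, not_forall] at hn
  obtain ⟨⟨p, hp⟩, q, hq⟩ := hn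
  simpa [SimpleGraph.Walk.mem_support_append_iff, hp, hq] using h (p.append q)

lemma antisymm (hab : G.Reachable a b) (hy : Separates G y a b) (hb : Separates G b a y) :
    y = b := by
  classical
  obtain ⟨p, hp⟩ := hab.exists_isPath
  by_contra hne
  exact SimpleGraph.Walk.endpoint_notMem_support_takeUntil hp (hy p) (Ne.symm hne) (hb _)

lemma of_separates_left (hay : G.Reachable a y) (hz : Separates G z a y) (hzy : z ≠ y)
    (hy : Separates G y a x) : Separates G y z x :=
  (hy.left_or_right z).resolve_left fun h => hzy (hz.antisymm hay h)

end Separates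

lemma separates_or_separates_of_adj (hG : G.IsAcyclic) (hvu : G.Adj v u) (x : V) :
    Separates G u v x ∨ Separates G v u x := by
  by_contra! h
  simp only [Separates, not_forall] at h
  obtain ⟨⟨p, hp⟩, q, hq⟩ := h
  have hbridge := SimpleGraph.isAcyclic_iff_forall_adj_isBridge.1 hG hvu
  have he := SimpleGraph.isBridge_iff_forall_walk_mem_edges.1 hbridge (p.append q.reverse)
  rw [SimpleGraph.Walk.edges_append, List.mem_append, SimpleGraph.Walk.edges_reverse,
    List.mem_reverse] at he
  rcases he with he | he
  · exact hp (p.snd_mem_support_of_mem_edges he)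
  · exact hq (q.fst_mem_support_of_mem_edges he)

lemma not_separates_iff_of_adj (hG : G.IsTree) (hvu : G.Adj v u) :
    ¬ Separates G u v x ↔ Separates G v u x :=
  ⟨(separates_or_separates_of_adj hG.isAcyclic hvu x).resolve_left, fun hv hu =>
    hvu.ne' (hu.symm.antisymm (hG.connected x v) hv.symm)⟩

lemma separates_of_mem_support (hG : G.IsAcyclic) {p : G.Walk a b} (hp : p.IsPath)
    (hy : y ∈ p.support) : Separates G y a b := by
  classical
  intro w
  have hpw : p = w.toPath :=
    congrArg Subtype.val ((hG.subsingleton_path a b).elim ⟨p, hp⟩ w.toPath)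
  exact w.support_toPath_subset_support (hpw ▸ hy)

end Separation

/-- The parent of `w` in the tree rooted at `r`, that is, the second vertex of the path from `w` to
`r`. The parent of the root is the root itself, since `Walk.snd` of the empty walk is its only
vertex. -/
noncomputable def treeParent {V : Type*} {G : SimpleGraph V} (hG : G.IsTree) (r w : V) : V :=
  (hG.existsUnique_path w r).choose.snd

section Parent

variable {V : Type*} {G : SimpleGraph V} {r u v w : V}

lemma treeParent_self (hG : G.IsTree) (r : V) : treeParent hG r r = r := by
  have hnil := SimpleGraph.Walk.isPath_iff_nil.1 (hG.existsUnique_path r r).choose_spec.1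
  exact congrArg SimpleGraph.Walk.snd hnil.eq_nil

lemma adj_treeParent (hG : G.IsTree) (hw : w ≠ r) : G.Adj w (treeParent hG r w) :=
  SimpleGraph.Walk.adj_snd (SimpleGraph.Walk.not_nil_of_ne hw)

lemma separates_treeParent (hG : G.IsTree) (r w : V) : Separates G (treeParent hG r w) w r :=
  separates_of_mem_support hG.isAcyclic (hG.existsUnique_path w r).choose_spec.1
    (SimpleGraph.Walk.getVert_mem_support _ _)

lemma treeParent_eq_iff (hG : G.IsTree) (hwu : G.Adj w u) :
    treeParent hG r w = u ↔ Separates G u w r :=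
  ⟨fun h => h ▸ separates_treeParent hG r w, fun h =>
    (hG.isAcyclic.eq_snd_of_adj_start (hG.existsUnique_path w r).choose_spec.1 hwu (h _)).symm⟩

lemma treeParent_eq_iff_treeParent_ne (hG : G.IsTree) (hvw : G.Adj v w) :
    treeParent hG r w = v ↔ treeParent hG r v ≠ w := by
  rw [Ne, treeParent_eq_iff hG hvw, treeParent_eq_iff hG hvw.symm, not_separates_iff_of_adj hG hvw]

end Parent

section Subtrees

variable {V : Type*} {G : SimpleGraph V} {u v x y : V} {S A B : Finset V}

lemma isSubtree_singleton (G : SimpleGraph V) (v : V) : IsSubtree G {v} := by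
  refine ⟨singleton_nonempty v, ?_⟩
  rw [coe_singleton]
  exact SimpleGraph.Connected.of_subsingleton

lemma IsSubtree.mem_of_separates (hS : IsSubtree G S) (hv : v ∈ S) (hx : x ∈ S)
    (hy : Separates G y v x) : y ∈ S := by
  obtain ⟨w⟩ := hS.2.preconnected ⟨v, hv⟩ ⟨x, hx⟩
  have hyw : y ∈ (w.map (SimpleGraph.Embedding.induce (S : Set V)).toHom).support := hy _
  rw [SimpleGraph.Walk.support_map, List.mem_map] at hyw
  obtain ⟨z, -, rfl⟩ := hyw
  exact z.2

lemma isSubtree_of_forall_separates (hG : G.IsTree) (hv : v ∈ S)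
    (h : ∀ x ∈ S, ∀ y, Separates G y v x → y ∈ S) : IsSubtree G S := by
  refine ⟨⟨v, hv⟩, ?_⟩
  rw [SimpleGraph.connected_iff_exists_forall_reachable]
  refine ⟨⟨v, hv⟩, fun ⟨x, hx⟩ => ?_⟩
  obtain ⟨p, hp⟩ := (hG.connected v x).exists_isPath
  exact ⟨p.induce _ fun y hy => h x hx y (separates_of_mem_support hG.isAcyclic hp hy)⟩

lemma IsSubtree.union_s3 [DecidableEq V] (hvu : G.Adj v u) (hA : IsSubtree G A) (hB : IsSubtree G B)
    (hv : v ∈ A) (hu : u ∈ B) : IsSubtree G (A ∪ B) := by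
  refine ⟨⟨v, mem_union_left _ hv⟩, ?_⟩
  rw [coe_union]
  exact SimpleGraph.connected_induce_union hA.2.preconnected hB.2.preconnected hv hu hvu

lemma IsSubtree.separates_of_notMem (hG : G.IsTree) (hvu : G.Adj v u) (hS : IsSubtree G S)
    (hv : v ∈ S) (hu : u ∉ S) (hx : x ∈ S) : Separates G v u x :=
  (not_separates_iff_of_adj hG hvu).1 fun h => hu (hS.mem_of_separates hv hx h)

end Subtrees

open Classical in
/-- The part of `S` on the side of `v` of the edge `vu`. Together with the part on the other side,
`sidePart G u v S`, it splits a subtree of a tree at the edge. -/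
noncomputable def sidePart {V : Type*} (G : SimpleGraph V) (v u : V) (S : Finset V) : Finset V :=
  {x ∈ S | Separates G v u x}

section EdgeSplitting

variable {V : Type*} {G : SimpleGraph V} {u v x : V} {S A B : Finset V}

lemma mem_sidePart : x ∈ sidePart G v u S ↔ x ∈ S ∧ Separates G v u x := by
  simp only [sidePart, mem_filter]

lemma sidePart_subset : sidePart G v u S ⊆ S := fun _ hx => (mem_sidePart.1 hx).1

lemma left_mem_sidePart (hv : v ∈ S) : v ∈ sidePart G v u S :=
  mem_sidePart.2 ⟨hv, separates_right u v⟩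

lemma right_notMem_sidePart (hvu : v ≠ u) : u ∉ sidePart G v u S := fun h =>
  hvu (mem_sidePart.1 h).2.eq_of_self

lemma sidePart_union_sidePart [DecidableEq V] (hG : G.IsAcyclic) (hvu : G.Adj v u) (S : Finset V) :
    sidePart G v u S ∪ sidePart G u v S = S := by
  ext x
  simp only [mem_union, mem_sidePart, ← and_or_left, and_iff_left_iff_imp]
  exact fun _ => (separates_or_separates_of_adj hG hvu x).symm

lemma sidePart_union_eq_left [DecidableEq V] (hG : G.IsTree) (hvu : G.Adj v u) (hA : IsSubtree G A)
    (hB : IsSubtree G B) (hv : v ∈ A) (hu : u ∈ B) (huA : u ∉ A) (hvB : v ∉ B) :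
    sidePart G v u (A ∪ B) = A := by
  ext x
  rw [mem_sidePart, mem_union]
  constructor
  · rintro ⟨hx | hx, h⟩
    · exact hx
    · exact absurd h ((not_separates_iff_of_adj hG hvu.symm).2
        (hB.separates_of_notMem hG hvu.symm hu hvB hx))
  · exact fun hx => ⟨Or.inl hx, hA.separates_of_notMem hG hvu hv huA hx⟩

lemma IsSubtree.sidePart (hG : G.IsTree) (hvu : G.Adj v u) (hS : IsSubtree G S) (hv : v ∈ S) :
    IsSubtree G (sidePart G v u S) := by
  refine isSubtree_of_forall_separates hG (left_mem_sidePart hv) fun x hx y hy => ?_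
  obtain ⟨hxS, hx⟩ := mem_sidePart.1 hx
  rw [← not_separates_iff_of_adj hG hvu] at hx
  refine mem_sidePart.2 ⟨hS.mem_of_separates hv hxS hy, ?_⟩
  exact (not_separates_iff_of_adj hG hvu).1 fun hu => hx (hy.trans hu)

end EdgeSplitting

open Classical in
/-- The subtrees containing `v` and disjoint from `X`. They interpolate between the families counted
by `N(T, v)`, where `X` is empty, and by `numSubtreesWithWithout`, where `X` is a singleton. -/
noncomputable def subtreesAvoiding {V : Type*} [Fintype V] (G : SimpleGraph V) (v : V)
    (X : Finset V) : Finset (Finset V) :=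
  {S | IsSubtree G S ∧ v ∈ S ∧ Disjoint S X}

/-- `N(T, v)`: the number of subtrees containing `v`. -/
noncomputable def numSubtreesWith {V : Type*} (G : SimpleGraph V) (v : V) : ℕ :=
  Nat.card {S : Finset V // IsSubtree G S ∧ v ∈ S}

section ProductFormula

variable {V : Type*} [Fintype V] {G : SimpleGraph V} {u v w : V} {S A B X : Finset V}

lemma mem_subtreesAvoiding :
    S ∈ subtreesAvoiding G v X ↔ IsSubtree G S ∧ v ∈ S ∧ Disjoint S X := by
  simp only [subtreesAvoiding, mem_filter, mem_univ, true_and]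

lemma card_subtreesAvoiding_empty (G : SimpleGraph V) (v : V) :
    #(subtreesAvoiding G v ∅) = numSubtreesWith G v := by
  classical
  rw [numSubtreesWith, Nat.card_eq_fintype_card, Fintype.card_subtype]
  simp only [subtreesAvoiding, disjoint_empty_right, and_true]

lemma card_subtreesAvoiding_singleton (G : SimpleGraph V) (v u : V) :
    #(subtreesAvoiding G v {u}) = η G v u := by
  classical
  rw [numSubtreesWithWithout, Nat.card_eq_fintype_card, Fintype.card_subtype]
  simp only [subtreesAvoiding, disjoint_singleton_right]

lemma sidePart_mem_subtreesAvoiding [DecidableEq V] (hG : G.IsTree) (hvu : G.Adj v u)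
    (hS : S ∈ subtreesAvoiding G v X) :
    sidePart G v u S ∈ subtreesAvoiding G v (insert u X) := by
  obtain ⟨hS, hv, hX⟩ := mem_subtreesAvoiding.1 hS
  refine mem_subtreesAvoiding.2 ⟨hS.sidePart hG hvu hv, left_mem_sidePart hv, ?_⟩
  exact disjoint_insert_right.2 ⟨right_notMem_sidePart hvu.ne, hX.mono_left sidePart_subset⟩

lemma union_mem_subtreesAvoiding [DecidableEq V] [DecidableRel G.Adj] (hG : G.IsTree)
    (hvu : G.Adj v u) (hX : X ⊆ G.neighborFinset v)
    (hu : u ∉ X) (hA : A ∈ subtreesAvoiding G v X) (hB : B ∈ subtreesAvoiding G u {v}) :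
    A ∪ B ∈ subtreesAvoiding G v X := by
  obtain ⟨hA, hvA, hAX⟩ := mem_subtreesAvoiding.1 hA
  obtain ⟨hB, huB, hvB⟩ := mem_subtreesAvoiding.1 hB
  refine mem_subtreesAvoiding.2 ⟨hA.union_s3 hvu hB hvA huB, mem_union_left _ hvA,
    disjoint_union_left.2 ⟨hAX, disjoint_left.2 fun x hxB hxX => ?_⟩⟩
  have hvx : G.Adj v x := (G.mem_neighborFinset v x).1 (hX hxX)
  have hux : Separates G u v x :=
    hB.separates_of_notMem hG hvu.symm huB (disjoint_singleton_right.1 hvB) hxB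
  rcases hux.eq_or_eq_of_adj hvx with rfl | rfl
  exacts [hvu.ne rfl, hu hxX]

lemma card_filter_mem_subtreesAvoiding [DecidableEq V] [DecidableRel G.Adj] (hG : G.IsTree)
    (hvu : G.Adj v u) (hX : X ⊆ G.neighborFinset v) (hu : u ∉ X) :
    #{S ∈ subtreesAvoiding G v X | u ∈ S} =
      #(subtreesAvoiding G v (insert u X)) * #(subtreesAvoiding G u {v}) := by
  rw [← card_product]
  refine card_bij' (fun S _ => (sidePart G v u S, sidePart G u v S)) (fun P _ => P.1 ∪ P.2)
    ?_ ?_ (fun S _ => sidePart_union_sidePart hG.isAcyclic hvu S) ?_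
  · intro S hS
    obtain ⟨hS, hu⟩ := mem_filter.1 hS
    have huS : S ∈ subtreesAvoiding G u ∅ :=
      mem_subtreesAvoiding.2 ⟨(mem_subtreesAvoiding.1 hS).1, hu, disjoint_empty_right S⟩
    have hside := sidePart_mem_subtreesAvoiding hG hvu.symm huS
    rw [insert_empty_eq] at hside
    exact mem_product.2 ⟨sidePart_mem_subtreesAvoiding hG hvu hS, hside⟩
  · intro P hP
    obtain ⟨hA, hB⟩ := mem_product.1 hP
    obtain ⟨hA, hvA, hAX⟩ := mem_subtreesAvoiding.1 hA
    have hA' := mem_subtreesAvoiding.2 ⟨hA, hvA, (disjoint_insert_right.1 hAX).2⟩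
    exact mem_filter.2 ⟨union_mem_subtreesAvoiding hG hvu hX hu hA' hB,
      mem_union_right _ (mem_subtreesAvoiding.1 hB).2.1⟩
  · intro P hP
    obtain ⟨hA, hB⟩ := mem_product.1 hP
    obtain ⟨hA, hvA, hAX⟩ := mem_subtreesAvoiding.1 hA
    obtain ⟨hB, huB, hvB⟩ := mem_subtreesAvoiding.1 hB
    have huA := (disjoint_insert_right.1 hAX).1
    rw [disjoint_singleton_right] at hvB
    refine Prod.ext (sidePart_union_eq_left hG hvu hA hB hvA huB huA hvB) ?_
    simpa only [union_comm] using sidePart_union_eq_left hG hvu.symm hB hA huB hvA hvB huA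

lemma card_subtreesAvoiding_eq_mul [DecidableEq V] [DecidableRel G.Adj] (hG : G.IsTree)
    (hvu : G.Adj v u) (hX : X ⊆ G.neighborFinset v) (hu : u ∉ X) :
    #(subtreesAvoiding G v X) = (1 + η G u v) * #(subtreesAvoiding G v (insert u X)) := by
  have hnotMem : {S ∈ subtreesAvoiding G v X | u ∉ S} = subtreesAvoiding G v (insert u X) := by
    ext S
    simp only [mem_filter, mem_subtreesAvoiding, disjoint_insert_right]
    tauto
  rw [← card_filter_add_card_filter_not (s := subtreesAvoiding G v X) (fun S => u ∈ S),
    card_filter_mem_subtreesAvoiding hG hvu hX hu, hnotMem, card_subtreesAvoiding_singleton]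
  ring

lemma subtreesAvoiding_neighborFinset [DecidableRel G.Adj] (hG : G.IsTree) (v : V) :
    subtreesAvoiding G v (G.neighborFinset v) = {{v}} := by
  ext S
  rw [mem_subtreesAvoiding, mem_singleton]
  constructor
  · rintro ⟨hS, hv, hd⟩
    refine eq_singleton_iff_unique_mem.2 ⟨hv, fun x hx => ?_⟩
    by_contra hne
    refine disjoint_left.1 hd (hS.mem_of_separates hv hx (separates_treeParent hG x v)) ?_
    exact (G.mem_neighborFinset _ _).2 (adj_treeParent hG (Ne.symm hne))
  · rintro rfl
    exact ⟨isSubtree_singleton G v, mem_singleton_self v, by simp⟩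

lemma card_subtreesAvoiding_sdiff [DecidableEq V] [DecidableRel G.Adj] (hG : G.IsTree)
    {Y : Finset V} (hY : Y ⊆ G.neighborFinset v) :
    #(subtreesAvoiding G v (G.neighborFinset v \ Y)) = ∏ w ∈ Y, (1 + η G w v) := by
  induction Y using Finset.induction_on with
  | empty => rw [sdiff_empty, subtreesAvoiding_neighborFinset hG, card_singleton, prod_empty]
  | insert u Y hu ih =>
    obtain ⟨huv, hY⟩ := insert_subset_iff.1 hY
    have hinsert : insert u (G.neighborFinset v \ insert u Y) = G.neighborFinset v \ Y := by
      rw [sdiff_insert, insert_erase (mem_sdiff.2 ⟨huv, hu⟩)]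
    rw [prod_insert hu, ← ih hY, card_subtreesAvoiding_eq_mul hG
      ((G.mem_neighborFinset v u).1 huv) sdiff_subset (by simp), hinsert]

lemma numSubtreesWith_eq_prod [DecidableRel G.Adj] (hG : G.IsTree) (v : V) :
    numSubtreesWith G v = ∏ w ∈ G.neighborFinset v, (1 + η G w v) := by
  classical
  rw [← card_subtreesAvoiding_sdiff hG Subset.rfl, sdiff_self, bot_eq_empty,
    card_subtreesAvoiding_empty]

lemma numSubtreesWithWithout_eq_prod [DecidableEq V] [DecidableRel G.Adj] (hG : G.IsTree)
    (hvu : G.Adj v u) :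
    η G v u = ∏ w ∈ (G.neighborFinset v).erase u, (1 + η G w v) := by
  rw [← card_subtreesAvoiding_sdiff hG (erase_subset u _),
    sdiff_erase_self ((G.mem_neighborFinset v u).2 hvu), card_subtreesAvoiding_singleton]

lemma numSubtreesWith_eq_mul (hG : G.IsTree) (hvu : G.Adj v u) :
    numSubtreesWith G v = (1 + η G u v) * η G v u := by
  classical
  rw [numSubtreesWith_eq_prod hG, numSubtreesWithWithout_eq_prod hG hvu,
    mul_prod_erase _ (fun w => 1 + η G w v) ((G.mem_neighborFinset v u).2 hvu)]

lemma numSubtreesWithWithout_pos (hvu : v ≠ u) : 0 < η G v u := by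
  rw [← card_subtreesAvoiding_singleton, card_pos]
  exact ⟨{v}, mem_subtreesAvoiding.2 ⟨isSubtree_singleton G v, mem_singleton_self v,
    disjoint_singleton.2 hvu⟩⟩

lemma numSubtreesWith_le_numSubtrees (v : V) : numSubtreesWith G v ≤ numSubtrees G :=
  Nat.card_le_card_of_injective _ (Subtype.impEmbedding _ _ fun _ h => h.1).injective

lemma one_add_numSubtreesWithWithout_le (hG : G.IsTree) (hvu : G.Adj v u) (hvw : G.Adj v w)
    (hwu : w ≠ u) : 1 + η G w v ≤ η G v u := by
  classical
  rw [numSubtreesWithWithout_eq_prod hG hvu]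
  exact single_le_prod' (f := fun w => 1 + η G w v) (fun _ _ => Nat.le_add_right 1 _)
    (mem_erase.2 ⟨hwu, (G.mem_neighborFinset v w).2 hvw⟩)

lemma numSubtreesWith_le_iff (hG : G.IsTree) (hvu : G.Adj v u) :
    numSubtreesWith G v ≤ numSubtreesWith G u ↔ η G v u ≤ η G u v := by
  rw [numSubtreesWith_eq_mul hG hvu, numSubtreesWith_eq_mul hG hvu.symm, one_add_mul,
    one_add_mul, mul_comm (η G v u), add_le_add_iff_right]

end ProductFormula

/-- `r` belongs to the subtree core of `G`: no vertex lies in more subtrees than `r`. -/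
def IsSubtreeCore {V : Type*} (G : SimpleGraph V) (r : V) : Prop :=
  ∀ v, numSubtreesWith G v ≤ numSubtreesWith G r

section Unimodality

variable {V : Type*} [Finite V] {G : SimpleGraph V} {r u v w : V}

lemma numSubtreesWith_pos (v : V) : 0 < numSubtreesWith G v := by
  cases nonempty_fintype V
  rw [← card_subtreesAvoiding_empty, card_pos]
  exact ⟨{v}, mem_subtreesAvoiding.2 ⟨isSubtree_singleton G v, mem_singleton_self v,
    disjoint_empty_right _⟩⟩

lemma numSubtreesWith_lt_of_le (hG : G.IsTree) (hvu : G.Adj v u) (huw : G.Adj u w) (hvw : v ≠ w)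
    (h : numSubtreesWith G u ≤ numSubtreesWith G v) :
    numSubtreesWith G w < numSubtreesWith G u := by
  cases nonempty_fintype V
  rw [← not_le, numSubtreesWith_le_iff hG huw, not_le]
  calc η G w u
      < 1 + η G w u := lt_one_add _
    _ ≤ η G u v := one_add_numSubtreesWithWithout_le hG hvu.symm huw hvw.symm
    _ ≤ η G v u := (numSubtreesWith_le_iff hG hvu.symm).1 h
    _ ≤ 1 + η G v u := Nat.le_add_left _ _
    _ ≤ η G u w := one_add_numSubtreesWithWithout_le hG huw hvu.symm hvw

lemma exists_isSubtreeCore [Nonempty V] (G : SimpleGraph V) : ∃ r, IsSubtreeCore G r :=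
  Finite.exists_max (numSubtreesWith G)

lemma IsSubtreeCore.numSubtreesWith_le_treeParent (hr : IsSubtreeCore G r) (hG : G.IsTree) (w : V) :
    numSubtreesWith G w ≤ numSubtreesWith G (treeParent hG r w) := by
  induction hn : numSubtreesWith G w using Nat.strong_induction_on generalizing w with
  | _ n ih =>
    subst hn
    by_contra! hlt
    set p := treeParent hG r w with hp
    have hpr : p ≠ r := fun h => hlt.not_ge (h ▸ hr w)
    have hwr : w ≠ r := by
      rintro rfl
      exact hpr (treeParent_self hG w)
    have hpw : G.Adj p w := (adj_treeParent hG hwr).symm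
    refine hlt.not_gt (numSubtreesWith_lt_of_le hG (adj_treeParent hG hpr).symm hpw ?_
      (ih _ hlt p rfl))
    exact (treeParent_eq_iff_treeParent_ne hG hpw).1 hp.symm

end Unimodality

section Telescoping

variable {V : Type*} [Fintype V] {G : SimpleGraph V}

lemma filter_treeParent_eq [DecidableEq V] [DecidableRel G.Adj] (hG : G.IsTree) (r v : V) :
    {w ∈ univ.erase r | treeParent hG r w = v} =
      (G.neighborFinset v).erase (treeParent hG r v) := by
  ext w
  simp only [mem_filter, mem_erase, mem_univ, and_true, SimpleGraph.mem_neighborFinset]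
  constructor
  · rintro ⟨hw, rfl⟩
    have hadj := (adj_treeParent hG hw).symm
    exact ⟨((treeParent_eq_iff_treeParent_ne hG hadj).1 rfl).symm, hadj⟩
  · rintro ⟨hne, hvw⟩
    refine ⟨?_, (treeParent_eq_iff_treeParent_ne hG hvw).2 hne.symm⟩
    rintro rfl
    exact hne ((treeParent_eq_iff hG hvw).2 (separates_right v w)).symm

lemma prod_one_add_numSubtreesWithWithout_treeParent [DecidableEq V] (hG : G.IsTree) (r : V) :
    ∏ w ∈ univ.erase r, (1 + η G w (treeParent hG r w)) =
      numSubtreesWith G r * ∏ v ∈ univ.erase r, η G v (treeParent hG r v) := by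
  classical
  have hfiber (v : V) : ∏ w ∈ univ.erase r with treeParent hG r w = v,
      (1 + η G w (treeParent hG r w)) =
        ∏ w ∈ (G.neighborFinset v).erase (treeParent hG r v), (1 + η G w v) := by
    rw [← filter_treeParent_eq]
    exact prod_congr rfl fun w hw => by rw [(mem_filter.1 hw).2]
  rw [← prod_fiberwise (univ.erase r) (treeParent hG r), ← mul_prod_erase univ _ (mem_univ r)]
  congr 1
  · rw [hfiber, treeParent_self, erase_eq_of_notMem (G.notMem_neighborFinset_self r),
      numSubtreesWith_eq_prod hG]
  · refine prod_congr rfl fun v hv => ?_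
    rw [hfiber, numSubtreesWithWithout_eq_prod hG (adj_treeParent hG (ne_of_mem_erase hv))]

lemma sum_log_one_add_one_div_numSubtreesWithWithout [DecidableEq V] (hG : G.IsTree) (r : V) :
    ∑ w ∈ univ.erase r, Real.log (1 + 1 / (η G w (treeParent hG r w) : ℝ)) =
      Real.log (numSubtreesWith G r) := by
  have hpos : ∀ w ∈ univ.erase r, (0 : ℝ) < η G w (treeParent hG r w) := fun w hw =>
    Nat.cast_pos.2 (numSubtreesWithWithout_pos (adj_treeParent hG (ne_of_mem_erase hw)).ne)
  have hprod : ∏ w ∈ univ.erase r, (1 + η G w (treeParent hG r w) : ℝ) =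
      numSubtreesWith G r * ∏ w ∈ univ.erase r, (η G w (treeParent hG r w) : ℝ) := by
    exact_mod_cast prod_one_add_numSubtreesWithWithout_treeParent hG r
  rw [← Real.log_prod fun w hw => by have := hpos w hw; positivity,
    eq_div_of_mul_eq (prod_pos hpos).ne' hprod.symm, ← prod_div_distrib]
  refine congrArg Real.log (prod_congr rfl fun w hw => ?_)
  rw [add_div, div_self (hpos w hw).ne', add_comm]

end Telescoping

section SubtreeCore

variable {V : Type*} [Fintype V] {G : SimpleGraph V} {r w : V}

namespace IsSubtreeCore

lemma subtreeM_eq (hr : IsSubtreeCore G r) (hG : G.IsTree) (hw : w ≠ r) :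
    subtreeM G w = η G w (treeParent hG r w) := by
  have hadj := adj_treeParent hG hw
  refine le_antisymm (Nat.sInf_le ⟨_, hadj, rfl⟩) (le_csInf ⟨_, _, hadj, rfl⟩ ?_)
  rintro _ ⟨u, hu, rfl⟩
  obtain rfl | hne := eq_or_ne (treeParent hG r w) u
  · exact le_rfl
  · calc η G w (treeParent hG r w)
        ≤ η G (treeParent hG r w) w :=
          (numSubtreesWith_le_iff hG hadj).1 (hr.numSubtreesWith_le_treeParent hG w)
      _ ≤ 1 + η G (treeParent hG r w) w := Nat.le_add_left _ _
      _ ≤ η G w u := one_add_numSubtreesWithWithout_le hG hu hadj hne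

lemma sum_log_one_add_one_div_subtreeM (hr : IsSubtreeCore G r) (hG : G.IsTree) :
    ∑ w, Real.log (1 + 1 / (subtreeM G w : ℝ)) =
      Real.log (1 + 1 / (subtreeM G r : ℝ)) + Real.log (numSubtreesWith G r) := by
  classical
  rw [← add_sum_erase _ _ (mem_univ r), ← sum_log_one_add_one_div_numSubtreesWithWithout hG r]
  refine congrArg _ (sum_congr rfl fun w hw => ?_)
  rw [hr.subtreeM_eq hG (ne_of_mem_erase hw)]

end IsSubtreeCore

end SubtreeCore

open Classical in
/-- The union of the paths from `c` to the elements of `S`, for `G` a tree. -/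
noncomputable def pathHull {V : Type*} [Fintype V] (G : SimpleGraph V) (c : V) (S : Finset V) :
    Finset V :=
  {y | ∃ x ∈ S, Separates G y c x}

open Classical in
/-- The subtrees lying in the branch at `c` of the tree rooted at the neighbour `r` of `c`. -/
noncomputable def branchSubtrees {V : Type*} [Fintype V] (G : SimpleGraph V) (c r : V) :
    Finset (Finset V) :=
  {S | IsSubtree G S ∧ ∀ x ∈ S, Separates G c r x}

section Branches

variable {V : Type*} [Fintype V] {G : SimpleGraph V} {c r y z : V} {S : Finset V}

lemma mem_pathHull : y ∈ pathHull G c S ↔ ∃ x ∈ S, Separates G y c x := by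
  simp only [pathHull, mem_filter, mem_univ, true_and]

lemma subset_pathHull (c : V) (S : Finset V) : S ⊆ pathHull G c S := fun x hx =>
  mem_pathHull.2 ⟨x, hx, separates_right c x⟩

lemma left_mem_pathHull (hS : S.Nonempty) : c ∈ pathHull G c S :=
  hS.elim fun x hx => mem_pathHull.2 ⟨x, hx, separates_left c x⟩

lemma mem_pathHull_of_separates (hy : y ∈ pathHull G c S) (hz : Separates G z c y) :
    z ∈ pathHull G c S := by
  obtain ⟨x, hx, hy⟩ := mem_pathHull.1 hy
  exact mem_pathHull.2 ⟨x, hx, hy.trans hz⟩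

lemma isSubtree_pathHull (hG : G.IsTree) (hS : S.Nonempty) : IsSubtree G (pathHull G c S) :=
  isSubtree_of_forall_separates hG (left_mem_pathHull hS) fun _ hx _ hy =>
    mem_pathHull_of_separates hx hy

lemma mem_pathHull_sdiff_of_separates [DecidableEq V] (hG : G.Connected) (hS : IsSubtree G S)
    (hy : y ∈ pathHull G c S \ S) (hz : Separates G z c y) : z ∈ pathHull G c S \ S := by
  obtain ⟨hy, hyS⟩ := mem_sdiff.1 hy
  refine mem_sdiff.2 ⟨mem_pathHull_of_separates hy hz, fun hzS => hyS ?_⟩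
  obtain ⟨x, hx, hyx⟩ := mem_pathHull.1 hy
  have hzy : z ≠ y := fun h => hyS (h ▸ hzS)
  exact hS.mem_of_separates hzS hx (hz.of_separates_left (hG c y) hzy hyx)

lemma left_mem_pathHull_sdiff [DecidableEq V] (hG : G.Connected) (hS : IsSubtree G S)
    (hne : (pathHull G c S \ S).Nonempty) : c ∈ pathHull G c S \ S :=
  hne.elim fun y hy => mem_pathHull_sdiff_of_separates hG hS hy (separates_left c y)

lemma isSubtree_pathHull_sdiff [DecidableEq V] (hG : G.IsTree) (hS : IsSubtree G S)
    (hne : (pathHull G c S \ S).Nonempty) : IsSubtree G (pathHull G c S \ S) :=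
  isSubtree_of_forall_separates hG (left_mem_pathHull_sdiff hG.connected hS hne)
    fun _ hx _ hy => mem_pathHull_sdiff_of_separates hG.connected hS hx hy

lemma mem_branchSubtrees :
    S ∈ branchSubtrees G c r ↔ IsSubtree G S ∧ ∀ x ∈ S, Separates G c r x := by
  simp only [branchSubtrees, mem_filter, mem_univ, true_and]

lemma notMem_pathHull_of_mem_branchSubtrees (hG : G.IsTree) (hrc : G.Adj r c)
    (hS : S ∈ branchSubtrees G c r) : r ∉ pathHull G c S := fun hr => by
  obtain ⟨x, hx, hrx⟩ := mem_pathHull.1 hr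
  exact (not_separates_iff_of_adj hG hrc.symm).2 ((mem_branchSubtrees.1 hS).2 x hx) hrx

lemma card_branchSubtrees_le (hG : G.IsTree) (hrc : G.Adj r c) :
    #(branchSubtrees G c r) ≤ η G c r * (1 + η G c r) := by
  classical
  calc #(branchSubtrees G c r)
      ≤ #(subtreesAvoiding G c {r} ×ˢ insert ∅ (subtreesAvoiding G c {r})) := by
        refine card_le_card_of_injOn (fun S => (pathHull G c S, pathHull G c S \ S)) ?_ ?_
        · intro S hS
          have hr := notMem_pathHull_of_mem_branchSubtrees hG hrc hS
          have hS := (mem_branchSubtrees.1 hS).1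
          refine mem_product.2 ⟨mem_subtreesAvoiding.2 ⟨isSubtree_pathHull hG hS.1,
            left_mem_pathHull hS.1, disjoint_singleton_right.2 hr⟩, mem_insert.2 ?_⟩
          refine (pathHull G c S \ S).eq_empty_or_nonempty.imp_right fun hne => ?_
          exact mem_subtreesAvoiding.2 ⟨isSubtree_pathHull_sdiff hG hS hne,
            left_mem_pathHull_sdiff hG.connected hS hne,
            disjoint_singleton_right.2 fun h => hr (mem_sdiff.1 h).1⟩
        · intro S _ S' _ h
          obtain ⟨hhull, hdiff⟩ := Prod.mk.inj h
          rw [← Finset.sdiff_sdiff_eq_self (subset_pathHull (G := G) c S), hdiff, hhull,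
            Finset.sdiff_sdiff_eq_self (subset_pathHull c S')]
    _ ≤ η G c r * (1 + η G c r) := by
        rw [card_product, card_subtreesAvoiding_singleton, add_comm 1]
        refine Nat.mul_le_mul_left _ ((card_insert_le _ _).trans ?_)
        rw [card_subtreesAvoiding_singleton]

lemma exists_mem_branchSubtrees_of_notMem (hG : G.IsTree) (hS : IsSubtree G S) (hr : r ∉ S) :
    ∃ c, G.Adj r c ∧ S ∈ branchSubtrees G c r := by
  obtain ⟨x, hx⟩ := hS.1
  have hrx : r ≠ x := fun h => hr (h ▸ hx)
  have hrc : G.Adj r (treeParent hG x r) := adj_treeParent hG hrx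
  refine ⟨_, hrc, mem_branchSubtrees.2 ⟨hS, fun y hy => ?_⟩⟩
  by_contra hcy
  rw [not_separates_iff_of_adj hG hrc] at hcy
  have hcx := (not_separates_iff_of_adj hG hrc.symm).2 (separates_treeParent hG x r)
  have hxy := (hcy.left_or_right x).resolve_left hcx
  exact hr (hS.mem_of_separates hx hy hxy)

lemma numSubtrees_le_add_sum [DecidableRel G.Adj] (hG : G.IsTree) (r : V) :
    numSubtrees G ≤
      numSubtreesWith G r + ∑ c ∈ G.neighborFinset r, η G c r * (1 + η G c r) := by
  classical
  have hcover : ({S | IsSubtree G S} : Finset (Finset V)) ⊆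
      subtreesAvoiding G r ∅ ∪ (G.neighborFinset r).biUnion fun c => branchSubtrees G c r := by
    intro S hS
    have hS : IsSubtree G S := (mem_filter.1 hS).2
    by_cases hr : r ∈ S
    · exact mem_union_left _ (mem_subtreesAvoiding.2 ⟨hS, hr, disjoint_empty_right _⟩)
    · obtain ⟨c, hrc, hc⟩ := exists_mem_branchSubtrees_of_notMem hG hS hr
      exact mem_union_right _ (mem_biUnion.2 ⟨c, (G.mem_neighborFinset r c).2 hrc, hc⟩)
  calc numSubtrees G
      = #({S | IsSubtree G S} : Finset (Finset V)) := by
        rw [numSubtrees, Nat.card_eq_fintype_card, Fintype.card_subtype]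
    _ ≤ #(subtreesAvoiding G r ∅) +
          #((G.neighborFinset r).biUnion fun c => branchSubtrees G c r) :=
        (card_le_card hcover).trans (card_union_le _ _)
    _ ≤ numSubtreesWith G r + ∑ c ∈ G.neighborFinset r, η G c r * (1 + η G c r) := by
        rw [card_subtreesAvoiding_empty]
        refine Nat.add_le_add_left (card_biUnion_le.trans (sum_le_sum fun c hc => ?_)) _
        exact card_branchSubtrees_le hG ((G.mem_neighborFinset r c).1 hc)

lemma sum_mul_one_add_numSubtreesWithWithout_le [DecidableEq V] [DecidableRel G.Adj]
    (hG : G.IsTree) (hrc : G.Adj r c) (hmax : ∀ d ∈ G.neighborFinset r, η G d r ≤ η G c r) :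
    ∑ d ∈ (G.neighborFinset r).erase c, η G d r * (1 + η G d r) ≤ numSubtreesWith G r := calc
  ∑ d ∈ (G.neighborFinset r).erase c, η G d r * (1 + η G d r)
    ≤ ∑ d ∈ (G.neighborFinset r).erase c, η G d r * (1 + η G c r) := sum_le_sum fun d hd =>
      Nat.mul_le_mul_left _ (Nat.add_le_add_left (hmax d (mem_of_mem_erase hd)) 1)
  _ = (1 + η G c r) * ∑ d ∈ (G.neighborFinset r).erase c, η G d r := by
      rw [← sum_mul, mul_comm]
  _ ≤ (1 + η G c r) * ∏ d ∈ (G.neighborFinset r).erase c, (1 + η G d r) :=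
      Nat.mul_le_mul_left _ <| (Nat.le_add_left _ 1).trans <|
        one_add_sum_le_prod_one_add fun _ _ => Nat.zero_le _
  _ = numSubtreesWith G r := by
      rw [numSubtreesWith_eq_mul hG hrc, numSubtreesWithWithout_eq_prod hG hrc]

lemma IsSubtreeCore.numSubtrees_le_three_mul (hr : IsSubtreeCore G r) (hG : G.IsTree) :
    numSubtrees G ≤ 3 * numSubtreesWith G r := by
  classical
  have hsum := numSubtrees_le_add_sum hG r
  rcases (G.neighborFinset r).eq_empty_or_nonempty with hempty | hne
  · rw [hempty, sum_empty] at hsum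
    omega
  · obtain ⟨c, hc, hmax⟩ := exists_max_image (G.neighborFinset r) (fun c => η G c r) hne
    have hrc := (G.mem_neighborFinset r c).1 hc
    have hbranch : η G c r * (1 + η G c r) ≤ numSubtreesWith G r := by
      rw [numSubtreesWith_eq_mul hG hrc, mul_comm]
      exact Nat.mul_le_mul_left _ ((numSubtreesWith_le_iff hG hrc.symm).1 (hr c))
    have hrest := sum_mul_one_add_numSubtreesWithWithout_le hG hrc hmax
    rw [← add_sum_erase _ _ hc] at hsum
    omega

end Branches

theorem stmt3 {V : Type*} [Fintype V] (G : SimpleGraph V) (hG : G.IsTree)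
    (h2 : 2 ≤ Fintype.card V) :
    |Real.log (numSubtrees G : ℝ) -
        ∑ w : V, Real.log (1 + 1 / (subtreeM G w : ℝ))| ≤ 2 * Real.log 2 := by
  have : Nonempty V := hG.connected.nonempty
  obtain ⟨r, hr⟩ := exists_isSubtreeCore G
  have hM : 0 ≤ Real.log (1 + 1 / (subtreeM G r : ℝ)) :=
    Real.log_nonneg (le_add_of_nonneg_right (by positivity))
  have hM' := log_one_add_one_div_natCast_le_log_two (subtreeM G r)
  have hpos : (0 : ℝ) < numSubtreesWith G r := by exact_mod_cast numSubtreesWith_pos r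
  have hle : Real.log (numSubtreesWith G r) ≤ Real.log (numSubtrees G) :=
    Real.log_le_log hpos (by exact_mod_cast numSubtreesWith_le_numSubtrees r)
  have hle' : Real.log (numSubtrees G) ≤ 2 * Real.log 2 + Real.log (numSubtreesWith G r) := calc
    Real.log (numSubtrees G) ≤ Real.log (2 ^ 2 * numSubtreesWith G r) := by
      have h3 : (numSubtrees G : ℝ) ≤ 3 * numSubtreesWith G r := by
        exact_mod_cast hr.numSubtrees_le_three_mul hG
      have hN : (0 : ℝ) < numSubtrees G :=
        hpos.trans_le (by exact_mod_cast numSubtreesWith_le_numSubtrees r)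
      exact Real.log_le_log hN (by linarith)
    _ = 2 * Real.log 2 + Real.log (numSubtreesWith G r) := by
      rw [Real.log_mul (by norm_num) hpos.ne', Real.log_pow, Nat.cast_ofNat]
  rw [hr.sum_log_one_add_one_div_subtreeM hG, abs_le]
  constructor <;> linarith
end
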